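/- Consider the batch variant of DProp in which each decision step adds an arbitrary nonempty set E ⊆ U^{k-1} of undecided atoms to F (i.e., F^k = F^{k-1} ∪ E) before propagating. If such a batch DProp run on a normal logic program P over its finite atom set terminates with U^∞ = ∅ and T^∞ ∩ F^∞ = ∅, then its final true set T^∞ is a stable model of P. -/

import Mathlib

/-- A rule of a normal logic program: head atom, positive body atoms, default-negated body atoms. -/
structure Rule (α : Type) where
  head : α
  pos : Finset α
  neg : Finset α

/-- The immediate consequence operator `C_{P,J}(I)`. -/
def imCons {α : Type} (P : Set (Rule α)) (J I : Set α) : Set α :=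
  { a | ∃ r ∈ P, r.head = a ∧ ↑r.pos ⊆ I ∧ ∀ b ∈ r.neg, b ∉ J }

lemma imCons_mono {α : Type} (P : Set (Rule α)) (J : Set α) : Monotone (imCons P J) := by
  rintro I I' h a ⟨r, hr, hh, hp, hn⟩
  exact ⟨r, hr, hh, fun x hx => h (hp hx), hn⟩

/-- `C_{P,J}^∞(I)`: the least fixpoint of `C_{P,J}` above `I`, obtained by iterating from `I`. -/
def imConsInf {α : Type} (P : Set (Rule α)) (J I : Set α) : Set α :=
  OrderHom.lfp ⟨fun X => I ∪ imCons P J X,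
    fun _ _ h => Set.union_subset_union (le_refl I) (imCons_mono P J h)⟩

/-- The Gelfond–Lifschitz reduct `P^S`. -/
def reduct {α : Type} (P : Set (Rule α)) (S : Set α) : Set (Rule α) :=
  { r' | ∃ r ∈ P, (∀ b ∈ r.neg, b ∉ S) ∧ r' = ⟨r.head, r.pos, ∅⟩ }

/-- `M` is a model of the program `P`. -/
def isModel {α : Type} (P : Set (Rule α)) (M : Set α) : Prop :=
  ∀ r ∈ P, ↑r.pos ⊆ M → (∀ b ∈ r.neg, b ∉ M) → r.head ∈ M

/-- `S` is a stable model of `P`: `S` is the least model of the reduct `P^S`. -/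
def isStableModel {α : Type} (P : Set (Rule α)) (S : Set α) : Prop :=
  isModel (reduct P S) S ∧ ∀ M : Set α, isModel (reduct P S) M → S ⊆ M

lemma imConsInf_eq' {α : Type} (P : Set (Rule α)) (J I : Set α) :
    I ∪ imCons P J (imConsInf P J I) = imConsInf P J I :=
  OrderHom.map_lfp (⟨fun X => I ∪ imCons P J X,
    fun _ _ h => Set.union_subset_union (le_refl I) (imCons_mono P J h)⟩ : Set α →o Set α)

lemma imConsInf_le' {α : Type} (P : Set (Rule α)) (J I M : Set α)
    (h1 : I ⊆ M) (h2 : imCons P J M ⊆ M) : imConsInf P J I ⊆ M :=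
  OrderHom.lfp_le (⟨fun X => I ∪ imCons P J X,
    fun _ _ h => Set.union_subset_union (le_refl I) (imCons_mono P J h)⟩ : Set α →o Set α)
    (Set.union_subset h1 h2)

/-- Batch variant of DProp: each decision adds a nonempty set
`E ⊆ U^{k-1}` of undecided atoms to `F`. If such a run terminates with `U^∞ = ∅` and
`T^∞ ∩ F^∞ = ∅`, its final true set is a stable model of `P`. -/
theorem batch_dprop_run_yields_stable_model {α : Type} [Fintype α]
    (P : Set (Rule α)) (m : ℕ) (T F U : ℕ → Set α)
    (hT0 : T 0 = imConsInf P Set.univ ∅)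
    (hF0 : F 0 = (∅ : Set α))
    (hU0 : U 0 = Set.univ \ (T 0 ∪ F 0))
    (hdec : ∀ k, 1 ≤ k → k ≤ m →
      ∃ E : Set α, E ⊆ U (k - 1) ∧ E.Nonempty ∧ F k = F (k - 1) ∪ E)
    (hprop : ∀ k, 1 ≤ k → k ≤ m → T k = imConsInf P (Set.univ \ F k) (T (k - 1)))
    (hupd : ∀ k, 1 ≤ k → k ≤ m → U k = U (k - 1) \ (T k ∪ F k))
    (hdone : U m = ∅)
    (hfree : T m ∩ F m = ∅) :
    isStableModel P (T m) := by
  have hF : ∀ d k, k + d = m → F k ⊆ F m := by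
    intro d
    induction d with
    | zero => intro k hk; simp at hk; subst hk; exact le_rfl
    | succ d ih =>
      intro k hk
      obtain ⟨E, -, -, hE⟩ := hdec (k + 1) (by omega) (by omega)
      have := ih (k + 1) (by omega)
      rw [hE] at this
      exact fun x hx => this (Or.inl hx)
  have hcov : ∀ k, k ≤ m → ∀ x, x ∈ T k ∨ x ∈ F k ∨ x ∈ U k := by
    intro k
    induction k with
    | zero =>
      intro _ x
      rw [hU0]
      simp only [Set.mem_diff, Set.mem_univ, Set.mem_union]
      tauto
    | succ k ih =>
      intro hk x
      obtain ⟨E, -, -, hE⟩ := hdec (k + 1) (by omega) hk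
      have h1 := hprop (k + 1) (by omega) hk
      have h2 := hupd (k + 1) (by omega) hk
      simp only [Nat.add_sub_cancel] at hE h1 h2
      have h3 : T k ⊆ T (k + 1) := by
        rw [h1, ← imConsInf_eq']
        exact Set.subset_union_left
      have h4 : F k ⊆ F (k + 1) := by
        rw [hE]
        exact Set.subset_union_left
      have h5 := ih (by omega) x
      have h6 := @h3 x
      have h7 := @h4 x
      rw [h2]
      simp only [Set.mem_diff, Set.mem_union]
      tauto
  have hclosed : imCons P (Set.univ \ F m) (T m) ⊆ T m := by
    rcases Nat.eq_zero_or_pos m with h | h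
    · subst h
      rw [hF0, Set.diff_empty, hT0]
      conv_rhs => rw [← imConsInf_eq']
      exact Set.subset_union_right
    · rw [hprop m h le_rfl]
      conv_rhs => rw [← imConsInf_eq']
      exact Set.subset_union_right
  refine ⟨?_, ?_⟩
  · rintro _ ⟨r, hr, hn, rfl⟩ hpos -
    refine hclosed ⟨r, hr, rfl, hpos, ?_⟩
    rintro b hb ⟨-, hbF⟩
    rcases hcov m le_rfl b with h | h | h
    · exact hn b hb h
    · exact hbF h
    · rw [hdone] at h
      exact h
  · intro M hM
    have key : ∀ k, k ≤ m → imCons P (Set.univ \ F k) M ⊆ M := by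
      rintro k hk _ ⟨r, hr, rfl, hpos, hn⟩
      refine hM ⟨r.head, r.pos, ∅⟩ ⟨r, hr, ?_, rfl⟩ hpos (by simp)
      intro b hb hbT
      have hbF : b ∈ F k := by
        by_contra hc
        exact hn b hb ⟨trivial, hc⟩
      have : b ∈ T m ∩ F m := ⟨hbT, hF (m - k) k (by omega) hbF⟩
      rw [hfree] at this
      exact this
    have : ∀ k, k ≤ m → T k ⊆ M := by
      intro k
      induction k with
      | zero =>
        intro hk
        have h0 := key 0 hk
        rw [hF0, Set.diff_empty] at h0
        rw [hT0]
        exact imConsInf_le' _ _ _ _ (Set.empty_subset _) h0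
      | succ k ih =>
        intro hk
        rw [hprop (k + 1) (by omega) hk]
        exact imConsInf_le' _ _ _ _ (ih (by omega)) (key _ hk)
    exact this m le_rfl
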